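/- arXiv:0806.4394 — 2 statements merged into one kernel-verified Lean document; each statement's English description precedes it below -/
import Mathlib

section
/- Let p be a prime and let σ ∈ ℤ_p be p-adically non-Liouville, with σ either 0 or not a rational integer (so j + σ ≠ 0 for every integer j ≥ 1). Then for every real δ > 1 there exists C > 0 such that |l!|_p · |∏_{j=1}^l (j + σ)|_p^{−1} ≤ C·δ^l for all l ∈ ℕ; equivalently, |∏_{j=1}^l j/(j+σ)|_p ≤ C·δ^l. -/
/-- `a ∈ ℤ_p` is `p`-adically non-Liouville: for every `δ > 1` there is `C > 0` with
`‖a + s‖⁻¹ ≤ C δ^{|s|}` for every integer `s` with `a + s ≠ 0`. -/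
def IsPAdicNonLiouville {p : ℕ} [Fact p.Prime] (a : ℤ_[p]) : Prop :=
  ∀ δ : ℝ, 1 < δ → ∃ C : ℝ, 0 < C ∧
    ∀ s : ℤ, (a : ℚ_[p]) + (s : ℚ_[p]) ≠ 0 → ‖(a : ℚ_[p]) + (s : ℚ_[p])‖⁻¹ ≤ C * δ ^ s.natAbs

/-!
Among `n + 1` consecutive shifts `x, x + 1, …, x + n` let `k + x` have the smallest norm. The
ultrametric inequality gives `‖i - k‖ ≤ ‖i + x‖` for the others, and the product of the differences
`i - k` is `± k! (n - k)!`, a divisor of `n!`. So `n!` is no larger in norm than the product of the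
shifts with its smallest factor removed: the whole estimate rests on one factor `k + x`, which the
non-Liouville hypothesis controls.
-/

open Finset
open scoped Nat

theorem prod_range_succ_erase_natCast_sub {R : Type*} [CommRing R] {k n : ℕ} (hk : k ≤ n) :
    ∏ i ∈ (range (n + 1)).erase k, ((i : R) - k) = (-1) ^ k * (k ! * (n - k)! : ℕ) := by
  induction n, hk using Nat.le_induction with
  | base =>
    have hreflect : ∏ i ∈ range k, ((k - i : ℕ) : R) = k ! := by
      rw [← Nat.cast_prod, ← Nat.descFactorial_eq_prod_range, Nat.descFactorial_self]
    have hneg : ∀ i ∈ range k, (i : R) - k = -((k - i : ℕ) : R) := fun i hi ↦ by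
      rw [Nat.cast_sub (mem_range.1 hi).le, neg_sub]
    rw [range_add_one, erase_insert notMem_range_self, prod_congr rfl hneg, prod_neg, card_range,
      hreflect, Nat.sub_self, Nat.factorial_zero, mul_one]
  | succ n hkn ih =>
    rw [range_add_one, erase_insert_of_ne (by omega), prod_insert (by simp), ih,
      ← Nat.cast_sub (by omega), Nat.succ_sub hkn, Nat.factorial_succ]
    push_cast
    ring

section Ultrametric

variable {R : Type*} [SeminormedCommRing R] [NormOneClass R] [NormMulClass R] [IsUltrametricDist R]

theorem norm_natCast_le_norm_natCast_of_dvd {m n : ℕ} (h : m ∣ n) : ‖(n : R)‖ ≤ ‖(m : R)‖ := by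
  obtain ⟨c, rfl⟩ := h
  rw [Nat.cast_mul, norm_mul]
  exact mul_le_of_le_one_right (norm_nonneg _) (IsUltrametricDist.norm_natCast_le_one R c)

theorem norm_factorial_le_prod_erase_norm_sub {k n : ℕ} (hk : k ≤ n) :
    ‖(n ! : R)‖ ≤ ∏ i ∈ (range (n + 1)).erase k, ‖(i : R) - k‖ := by
  calc ‖(n ! : R)‖ ≤ ‖((k ! * (n - k)! : ℕ) : R)‖ :=
        norm_natCast_le_norm_natCast_of_dvd (Nat.factorial_mul_factorial_dvd_factorial hk)
    _ = ‖∏ i ∈ (range (n + 1)).erase k, ((i : R) - k)‖ := by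
        rw [prod_range_succ_erase_natCast_sub hk, norm_mul, norm_pow, norm_neg, norm_one, one_pow,
          one_mul]
    _ = ∏ i ∈ (range (n + 1)).erase k, ‖(i : R) - k‖ := norm_prod _ _

theorem exists_norm_factorial_mul_le_norm_prod_range (n : ℕ) (x : R) :
    ∃ k ∈ range (n + 1), ‖(n ! : R)‖ * ‖(k : R) + x‖ ≤ ‖∏ i ∈ range (n + 1), ((i : R) + x)‖ := by
  obtain ⟨k, hk, hmin⟩ :=
    exists_min_image (range (n + 1)) (fun i ↦ ‖(i : R) + x‖) nonempty_range_add_one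
  have hsub : ∀ i ∈ range (n + 1), ‖(i : R) - k‖ ≤ ‖(i : R) + x‖ := fun i hi ↦ by
    simpa only [← sub_eq_add_neg, add_sub_add_right_eq_sub, norm_neg, max_eq_left (hmin i hi)]
      using IsUltrametricDist.norm_add_le_max ((i : R) + x) (-(k + x))
  refine ⟨k, hk, ?_⟩
  calc ‖(n ! : R)‖ * ‖(k : R) + x‖
      ≤ (∏ i ∈ (range (n + 1)).erase k, ‖(i : R) - k‖) * ‖(k : R) + x‖ := by
        gcongr
        exact norm_factorial_le_prod_erase_norm_sub (mem_range_succ_iff.1 hk)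
    _ ≤ (∏ i ∈ (range (n + 1)).erase k, ‖(i : R) + x‖) * ‖(k : R) + x‖ := by
        gcongr with i hi
        exact hsub i (mem_of_mem_erase hi)
    _ = ‖∏ i ∈ range (n + 1), ((i : R) + x)‖ := by
        rw [prod_erase_mul _ _ hk, norm_prod]

theorem exists_norm_factorial_mul_le_norm_prod_Icc {l : ℕ} (hl : l ≠ 0) (x : R) :
    ∃ k ∈ Icc 1 l, ‖(l ! : R)‖ * ‖(k : R) + x‖ ≤ ‖∏ j ∈ Icc 1 l, ((j : R) + x)‖ := by
  obtain ⟨n, rfl⟩ := Nat.exists_eq_succ_of_ne_zero hl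
  obtain ⟨k, hk, hle⟩ := exists_norm_factorial_mul_le_norm_prod_range n (1 + x)
  have hfact : ‖((n + 1)! : R)‖ ≤ ‖(n ! : R)‖ :=
    norm_natCast_le_norm_natCast_of_dvd (Nat.factorial_dvd_factorial n.le_succ)
  have hprod : ∏ i ∈ range (n + 1), ((i : R) + (1 + x)) = ∏ j ∈ Icc 1 (n + 1), ((j : R) + x) := by
    rw [← Ico_add_one_right_eq_Icc, prod_Ico_eq_prod_range]
    exact prod_congr rfl fun i _ ↦ by push_cast; ring
  refine ⟨k + 1, mem_Icc.2 ⟨k.succ_pos, mem_range.1 hk⟩, ?_⟩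
  calc ‖((n + 1)! : R)‖ * ‖((k + 1 : ℕ) : R) + x‖ ≤ ‖(n ! : R)‖ * ‖(k : R) + (1 + x)‖ := by
        rw [Nat.cast_succ, add_assoc]
        gcongr
    _ ≤ ‖∏ j ∈ Icc 1 (n + 1), ((j : R) + x)‖ := hprod ▸ hle

end Ultrametric

section NormedField

variable {K : Type*} [NormedField K] [IsUltrametricDist K]

theorem norm_factorial_mul_inv_norm_prod_Icc_le {x : K} (hx : ∀ j : ℕ, 1 ≤ j → (j : K) + x ≠ 0)
    {f : ℕ → ℝ} (hf : Monotone f) (hxf : ∀ j : ℕ, 1 ≤ j → ‖(j : K) + x‖⁻¹ ≤ f j)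
    {l : ℕ} (hl : l ≠ 0) :
    ‖(l ! : K)‖ * ‖∏ j ∈ Icc 1 l, ((j : K) + x)‖⁻¹ ≤ f l := by
  obtain ⟨k, hk, hle⟩ := exists_norm_factorial_mul_le_norm_prod_Icc hl x
  obtain ⟨hk1, hkl⟩ := mem_Icc.1 hk
  have hprod : 0 < ‖∏ j ∈ Icc 1 l, ((j : K) + x)‖ :=
    norm_pos_iff.2 (prod_ne_zero_iff.2 fun j hj ↦ hx j (mem_Icc.1 hj).1)
  calc ‖(l ! : K)‖ * ‖∏ j ∈ Icc 1 l, ((j : K) + x)‖⁻¹ ≤ ‖(k : K) + x‖⁻¹ := by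
        rwa [← div_eq_mul_inv, div_le_iff₀ hprod, inv_mul_eq_div,
          le_div_iff₀ (norm_pos_iff.2 (hx k hk1))]
    _ ≤ f k := hxf k hk1
    _ ≤ f l := hf hkl

theorem stmt7_general (x : K) (hx : ∀ j : ℕ, 1 ≤ j → (j : K) + x ≠ 0)
    (hxNL : ∀ δ : ℝ, 1 < δ → ∃ C : ℝ, ∀ j : ℕ, 1 ≤ j → ‖(j : K) + x‖⁻¹ ≤ C * δ ^ j) :
    ∀ δ : ℝ, 1 < δ → ∃ C : ℝ, 0 < C ∧
      ∀ l : ℕ, ‖(l ! : K)‖ * ‖∏ j ∈ Icc 1 l, ((j : K) + x)‖⁻¹ ≤ C * δ ^ l := by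
  intro δ hδ
  obtain ⟨C, hC⟩ := hxNL δ hδ
  have hmono : Monotone fun l : ℕ ↦ max C 1 * δ ^ l :=
    (pow_right_mono₀ hδ.le).const_mul (by positivity)
  have hbound : ∀ j : ℕ, 1 ≤ j → ‖(j : K) + x‖⁻¹ ≤ max C 1 * δ ^ j := fun j hj ↦
    (hC j hj).trans (by gcongr; exact le_max_left C 1)
  refine ⟨max C 1, by positivity, fun l ↦ ?_⟩
  rcases eq_or_ne l 0 with rfl | hl
  · simp
  · exact norm_factorial_mul_inv_norm_prod_Icc_le hx hmono hbound hl

end NormedField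

theorem natCast_add_ne_zero_of_eq_zero_or_ne_intCast {R : Type*} [AddGroupWithOne R] [CharZero R]
    {x : R} (hx : x = 0 ∨ ∀ i : ℤ, x ≠ i) {j : ℕ} (hj : 1 ≤ j) : (j : R) + x ≠ 0 := by
  rcases hx with rfl | hx
  · rw [add_zero]
    exact Nat.cast_ne_zero.2 (by omega)
  · intro h
    apply hx (-j)
    rw [Int.cast_neg, Int.cast_natCast, eq_neg_of_add_eq_zero_right h]

theorem IsPAdicNonLiouville.exists_inv_norm_natCast_add_le {p : ℕ} [Fact p.Prime] {a : ℤ_[p]}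
    (ha : IsPAdicNonLiouville a) (hne : ∀ j : ℕ, 1 ≤ j → (j : ℚ_[p]) + a ≠ 0) {δ : ℝ} (hδ : 1 < δ) :
    ∃ C : ℝ, ∀ j : ℕ, 1 ≤ j → ‖(j : ℚ_[p]) + a‖⁻¹ ≤ C * δ ^ j := by
  obtain ⟨C, -, hbound⟩ := ha δ hδ
  refine ⟨C, fun j hj ↦ ?_⟩
  simpa [add_comm] using hbound j (by simpa [add_comm] using hne j hj)

/-- **Estimate from claim 4 in the proof of Lemma 3.4.1.**
If `σ ∈ ℤ_p` is `p`-adically non-Liouville and either `0` or not a rational integer,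
then for every `δ > 1` there is `C > 0` such that
`|l!|_p · |∏_{j=1}^l (j + σ)|_p⁻¹ ≤ C δ^l` for all `l ∈ ℕ`. -/
theorem stmt7 (p : ℕ) [Fact p.Prime] (σ : ℤ_[p])
    (hσNL : IsPAdicNonLiouville σ)
    (hσ : σ = 0 ∨ ∀ i : ℤ, (σ : ℚ_[p]) ≠ (i : ℚ_[p])) :
    ∀ δ : ℝ, 1 < δ → ∃ C : ℝ, 0 < C ∧
      ∀ l : ℕ, ‖(l.factorial : ℚ_[p])‖ *
        ‖∏ j ∈ Finset.Icc 1 l, ((j : ℚ_[p]) + (σ : ℚ_[p]))‖⁻¹ ≤ C * δ ^ l := by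
  have hne : ∀ j : ℕ, 1 ≤ j → (j : ℚ_[p]) + σ ≠ 0 := fun _ ↦
    natCast_add_ne_zero_of_eq_zero_or_ne_intCast (hσ.imp_left PadicInt.coe_eq_zero.2)
  exact stmt7_general (σ : ℚ_[p]) hne fun _ ↦ hσNL.exists_inv_norm_natCast_add_le hne
end

section
/- Let p be a prime and let V be a ℚ_p-vector space equipped with a nonarchimedean norm ‖·‖. For q ∈ ℕ put P_q(y) := ∏_{j=1}^q ((j−1) − y)/j ∈ ℚ_p[y]. Let ∂ : V → V be a ℚ_p-linear map such that for every η ∈ (0,1) there exists C_η > 0 with ‖(P_q(∂))(v)‖ ≤ C_η·η^{−q}·‖v‖ for all q ∈ ℕ and all v ∈ V. Let ξ_1, …, ξ_{n₀} ∈ ℤ_p be such that every difference ξ_k − ξ_{k'} is p-adically non-Liouville and is either 0 or not a rational integer, let m ≥ 1 be an integer and Q ∈ ℚ_p[x] a polynomial, and define D_l(x) := Q(x) · ∏_{k=1}^{n₀} ∏_{j=1}^l ( (j − (x − ξ_k)) / (j − (ξ_1 − ξ_k)) )^m ∈ ℚ_p[x] (the denominators j − (ξ_1 − ξ_k) are nonzero).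 Then for every η ∈ (0,1) and every ε > 0 there exists L such that for all l ≥ L and all v ∈ V one has ‖(D_l(∂))(v)‖ ≤ ε·η^{−l}·‖v‖; that is, the operator norms of D_l(∂) multiplied by η^l tend to 0. -/
open Polynomial

/-- The polynomial `P_q(y) = ∏_{j=1}^q ((j-1) - y)/j ∈ ℚ_p[y]`. -/
noncomputable def Ppoly (p : ℕ) [Fact p.Prime] (q : ℕ) : Polynomial ℚ_[p] :=
  ∏ j ∈ Finset.Icc 1 q,
    Polynomial.C (((j : ℚ_[p]))⁻¹) * (Polynomial.C ((j : ℚ_[p]) - 1) - Polynomial.X)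

/-- The polynomial `D_l(x) = Q(x) ∏_{k=1}^{n₀} ∏_{j=1}^l ((j - (x - ξ_k)) /
(j - (ξ_1 - ξ_k)))^m ∈ ℚ_p[x]` (with `ξ_1 = ξ 0`) from Proposition 3.6.2. -/
noncomputable def Dpoly (p : ℕ) [Fact p.Prime] (n₀ : ℕ) (hn₀ : 0 < n₀)
    (ξ : Fin n₀ → ℤ_[p]) (m : ℕ) (Q : Polynomial ℚ_[p]) (l : ℕ) : Polynomial ℚ_[p] :=
  Q * ∏ k : Fin n₀, ∏ j ∈ Finset.Icc 1 l,
    (Polynomial.C (((j : ℚ_[p]) - ((ξ ⟨0, hn₀⟩ : ℚ_[p]) - (ξ k : ℚ_[p])))⁻¹) *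
      (Polynomial.C ((j : ℚ_[p]) + (ξ k : ℚ_[p])) - Polynomial.X)) ^ m

/-!
Call a sequence of operators subexponential if it is `O(σ ^ l)` for every `σ > 1`. Such sequences
form an algebra, so it is enough to treat each factor of `D_l(∂)` separately. With
`b = ξ_1 - ξ_k`, the `k`-th factor is the `m`-th power of `P_l(x - ξ_k - 1) / P_l(b - 1)`.

* Numerator: `P_l(y) = (-1) ^ l * choose y l`, so the Chu–Vandermonde identity writes
  `P_l(x - ξ_k - 1)` as the Cauchy product of `P_i(x)` with the `p`-adic integers
  `P_j(-ξ_k - 1)`, and Cauchy products of subexponential sequences are subexponential.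
* Denominator: `n! / (y (y + 1) ⋯ (y + n))` is an iterated finite difference of `1 / y`, so its
  norm is at most the largest of the `1 / |y + j|`. Hence `1 / |P_l(b - 1)|` is at most the largest
  `1 / |j - b|` with `1 ≤ j ≤ l`, which is subexponential because `b` is non-Liouville.
-/

section Subexponential

lemma exists_one_lt_mul_self_eq {σ : ℝ} (hσ : 1 < σ) : ∃ τ : ℝ, 1 < τ ∧ τ * τ = σ :=
  ⟨√σ, Real.lt_sqrt_of_sq_lt (by simpa using hσ), Real.mul_self_sqrt (by linarith)⟩

lemma exists_add_one_le_mul_pow {τ : ℝ} (hτ : 1 < τ) :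
    ∃ C : ℝ, 0 < C ∧ ∀ l : ℕ, (l + 1 : ℝ) ≤ C * τ ^ l := by
  have hτ' : 0 < τ - 1 := sub_pos.2 hτ
  refine ⟨1 + (τ - 1)⁻¹, add_pos one_pos (inv_pos.2 hτ'), fun l => ?_⟩
  have bernoulli : 1 + l * (τ - 1) ≤ τ ^ l := one_add_mul_sub_le_pow (by linarith) l
  have hl : (l : ℝ) ≤ (τ - 1)⁻¹ * τ ^ l := by
    rw [inv_mul_eq_div, le_div_iff₀ hτ']
    linarith
  linarith [one_le_pow₀ hτ.le (n := l)]

variable {𝕜 V : Type*} [NormedField 𝕜] [SeminormedAddCommGroup V] [NormedSpace 𝕜 V]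

/-- A sequence of linear endomorphisms is subexponential if its operator norms are `O(σ ^ l)` for
every `σ > 1`. The bound is stated pointwise, so that no operator norm is needed. -/
def IsSubexponential (A : ℕ → Module.End 𝕜 V) : Prop :=
  ∀ σ : ℝ, 1 < σ → ∃ K : ℝ, 0 < K ∧ ∀ l v, ‖A l v‖ ≤ K * σ ^ l * ‖v‖

namespace IsSubexponential

variable {A B : ℕ → Module.End 𝕜 V}

lemma of_bounded {K : ℝ} (hA : ∀ l v, ‖A l v‖ ≤ K * ‖v‖) : IsSubexponential A := by
  intro σ hσ
  refine ⟨max K 1, by positivity, fun l v => (hA l v).trans ?_⟩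
  gcongr
  calc K ≤ max K 1 := le_max_left _ _
    _ ≤ max K 1 * σ ^ l := le_mul_of_one_le_right (by positivity) (one_le_pow₀ hσ.le)

lemma const_apply (hA : IsSubexponential A) (l : ℕ) : IsSubexponential fun _ => A l := by
  obtain ⟨K, -, hK⟩ := hA 2 one_lt_two
  exact of_bounded fun _ => hK l

lemma algebraMap_of_norm_le {c : ℕ → 𝕜}
    (hc : ∀ σ : ℝ, 1 < σ → ∃ K : ℝ, 0 < K ∧ ∀ l, ‖c l‖ ≤ K * σ ^ l) :
    IsSubexponential fun l => algebraMap 𝕜 (Module.End 𝕜 V) (c l) := by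
  intro σ hσ
  obtain ⟨K, hK, hcK⟩ := hc σ hσ
  refine ⟨K, hK, fun l v => ?_⟩
  rw [Module.algebraMap_end_apply, norm_smul]
  gcongr
  exact hcK l

lemma add (hA : IsSubexponential A) (hB : IsSubexponential B) : IsSubexponential (A + B) := by
  intro σ hσ
  obtain ⟨K, hK, hAK⟩ := hA σ hσ
  obtain ⟨K', hK', hBK⟩ := hB σ hσ
  refine ⟨K + K', by positivity, fun l v => ?_⟩
  calc ‖A l v + B l v‖ ≤ K * σ ^ l * ‖v‖ + K' * σ ^ l * ‖v‖ :=
        norm_add_le_of_le (hAK l v) (hBK l v)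
    _ = (K + K') * σ ^ l * ‖v‖ := by ring

lemma exists_norm_mul_apply_le (hA : IsSubexponential A) (hB : IsSubexponential B)
    {τ : ℝ} (hτ : 1 < τ) :
    ∃ K : ℝ, 0 < K ∧ ∀ i j v, ‖(A i * B j) v‖ ≤ K * τ ^ (i + j) * ‖v‖ := by
  obtain ⟨K, hK, hAK⟩ := hA τ hτ
  obtain ⟨K', hK', hBK⟩ := hB τ hτ
  refine ⟨K * K', by positivity, fun i j v => ?_⟩
  calc ‖A i (B j v)‖ ≤ K * τ ^ i * ‖B j v‖ := hAK i _
    _ ≤ K * τ ^ i * (K' * τ ^ j * ‖v‖) := by gcongr; exact hBK j v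
    _ = K * K' * τ ^ (i + j) * ‖v‖ := by ring

lemma mul (hA : IsSubexponential A) (hB : IsSubexponential B) : IsSubexponential (A * B) := by
  intro σ hσ
  obtain ⟨τ, hτ, rfl⟩ := exists_one_lt_mul_self_eq hσ
  obtain ⟨K, hK, hAB⟩ := hA.exists_norm_mul_apply_le hB hτ
  refine ⟨K, hK, fun l v => ?_⟩
  simpa only [mul_pow, pow_add, Pi.mul_apply] using hAB l l v

lemma sum_antidiagonal (hA : IsSubexponential A) (hB : IsSubexponential B) :
    IsSubexponential fun l => ∑ ij ∈ Finset.HasAntidiagonal.antidiagonal l, A ij.1 * B ij.2 := by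
  intro σ hσ
  obtain ⟨τ, hτ, rfl⟩ := exists_one_lt_mul_self_eq hσ
  obtain ⟨K, hK, hAB⟩ := hA.exists_norm_mul_apply_le hB hτ
  obtain ⟨C, hC, hlC⟩ := exists_add_one_le_mul_pow hτ
  refine ⟨C * K, by positivity, fun l v => ?_⟩
  rw [LinearMap.sum_apply]
  calc ‖∑ ij ∈ Finset.HasAntidiagonal.antidiagonal l, (A ij.1 * B ij.2) v‖
      ≤ ∑ _ij ∈ Finset.HasAntidiagonal.antidiagonal l, K * τ ^ l * ‖v‖ :=
        norm_sum_le_of_le _ fun ij hij => by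
          simpa only [Finset.HasAntidiagonal.mem_antidiagonal.1 hij] using hAB ij.1 ij.2 v
    _ = (l + 1) * (K * τ ^ l * ‖v‖) := by simp
    _ ≤ C * τ ^ l * (K * τ ^ l * ‖v‖) := by gcongr; exact hlC l
    _ = C * K * (τ * τ) ^ l * ‖v‖ := by ring

lemma exists_forall_norm_apply_le (hA : IsSubexponential A) {σ ε : ℝ} (hσ : 1 < σ) (hε : 0 < ε) :
    ∃ L, ∀ l, L ≤ l → ∀ v, ‖A l v‖ ≤ ε * σ ^ l * ‖v‖ := by
  obtain ⟨τ, hτ, rfl⟩ := exists_one_lt_mul_self_eq hσ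
  obtain ⟨K, -, hAK⟩ := hA τ hτ
  obtain ⟨L, hL⟩ := pow_unbounded_of_one_lt (K / ε) hτ
  refine ⟨L, fun l hl v => (hAK l v).trans ?_⟩
  have hK : K ≤ ε * τ ^ l :=
    (div_le_iff₀' hε).1 (hL.le.trans (pow_le_pow_right₀ hτ.le hl))
  rw [mul_pow, ← mul_assoc]
  gcongr

end IsSubexponential

/-- The subexponential sequences as a subalgebra of all sequences of endomorphisms, with pointwise
operations. -/
def subexponential (𝕜 V : Type*) [NormedField 𝕜] [SeminormedAddCommGroup V] [NormedSpace 𝕜 V] :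
    Subalgebra 𝕜 (ℕ → Module.End 𝕜 V) where
  carrier := {A | IsSubexponential A}
  mul_mem' := IsSubexponential.mul
  add_mem' := IsSubexponential.add
  algebraMap_mem' c := IsSubexponential.of_bounded fun _ v => (norm_smul c v).le

/-- The sequences of polynomials whose values at `T` are subexponential. Unlike
`subexponential 𝕜 V` this algebra is commutative, hence closed under products over finite sets. -/
noncomputable def subexponentialAt (T : Module.End 𝕜 V) : Subalgebra 𝕜 (ℕ → 𝕜[X]) :=
  (subexponential 𝕜 V).comap ((aeval T).compLeft ℕ)

lemma mem_subexponentialAt {T : Module.End 𝕜 V} {A : ℕ → 𝕜[X]} :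
    A ∈ subexponentialAt T ↔ IsSubexponential fun l => aeval T (A l) :=
  Iff.rfl

lemma const_mem_subexponentialAt {T : Module.End 𝕜 V}
    (hX : (fun _ => X) ∈ subexponentialAt T) (Q : 𝕜[X]) : (fun _ => Q) ∈ subexponentialAt T := by
  induction Q using Polynomial.induction_on' with
  | add f g hf hg => exact add_mem hf hg
  | monomial n a =>
    rw [← smul_X_eq_monomial]
    exact Subalgebra.smul_mem _ (pow_mem hX n) a

end Subexponential

section PartialFractions

variable {K : Type*}

lemma ascPochhammer_eval_eq_prod_range [CommSemiring K] (n : ℕ) (y : K) :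
    (ascPochhammer K n).eval y = ∏ j ∈ Finset.range n, (y + j) := by
  induction n with
  | zero => simp
  | succ n ih => rw [ascPochhammer_succ_eval, ih, Finset.prod_range_succ]

lemma factorial_succ_div_ascPochhammer [Field K] {n : ℕ} {y : K}
    (hy : (ascPochhammer K (n + 2)).eval y ≠ 0) :
    ((n + 1).factorial : K) / (ascPochhammer K (n + 2)).eval y =
      n.factorial / (ascPochhammer K (n + 1)).eval y -
        n.factorial / (ascPochhammer K (n + 1)).eval (y + 1) := by
  have split_last : (ascPochhammer K (n + 2)).eval y =
      (ascPochhammer K (n + 1)).eval y * (y + (n + 1)) := by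
    simpa using ascPochhammer_succ_eval (n + 1) y
  have split_first : (ascPochhammer K (n + 2)).eval y =
      y * (ascPochhammer K (n + 1)).eval (y + 1) := by
    simp [ascPochhammer_succ_left (S := K) (n + 1), eval_comp]
  have hlast : (ascPochhammer K (n + 1)).eval y ≠ 0 := left_ne_zero_of_mul (split_last ▸ hy)
  have hfirst : (ascPochhammer K (n + 1)).eval (y + 1) ≠ 0 :=
    right_ne_zero_of_mul (split_first ▸ hy)
  rw [div_sub_div _ _ hlast hfirst, div_eq_div_iff hy (mul_ne_zero hlast hfirst),
    Nat.factorial_succ]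
  push_cast
  linear_combination
    (n.factorial : K) * ((ascPochhammer K (n + 1)).eval y * split_first -
      (ascPochhammer K (n + 1)).eval (y + 1) * split_last)

lemma norm_factorial_div_ascPochhammer_le [NormedField K] [IsUltrametricDist K] {M : ℝ} {n : ℕ} :
    ∀ {y : K}, (∀ j : ℕ, j ≤ n → y + j ≠ 0) → (∀ j : ℕ, j ≤ n → ‖y + j‖⁻¹ ≤ M) →
      ‖(n.factorial : K) / (ascPochhammer K (n + 1)).eval y‖ ≤ M := by
  induction n with
  | zero => intro y _ hM; simpa using hM 0 le_rfl
  | succ n ih =>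
    intro y hy hM
    have hne : (ascPochhammer K (n + 2)).eval y ≠ 0 := by
      rw [ascPochhammer_eval_eq_prod_range, Finset.prod_ne_zero_iff]
      exact fun j hj => hy j (Finset.mem_range_succ_iff.1 hj)
    have hshift (j : ℕ) : y + 1 + j = y + (j + 1 : ℕ) := by push_cast; ring
    rw [factorial_succ_div_ascPochhammer hne, sub_eq_add_neg]
    refine (IsUltrametricDist.norm_add_le_max _ _).trans (max_le ?_ ?_)
    · exact ih (fun j hj => hy j (by lia)) fun j hj => hM j (by lia)
    · rw [norm_neg]
      exact ih (fun j hj => hshift j ▸ hy (j + 1) (by lia))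
        fun j hj => hshift j ▸ hM (j + 1) (by lia)

end PartialFractions

section Padic

variable {p : ℕ} [Fact p.Prime]

lemma eval_Ppoly (q : ℕ) (y : ℚ_[p]) :
    (Ppoly p q).eval y = (ascPochhammer ℚ_[p] q).eval (-y) / q.factorial := by
  induction q with
  | zero => simp [Ppoly]
  | succ q ih =>
    have hsucc : (Ppoly p (q + 1)).eval y = (Ppoly p q).eval y * ((q + 1 : ℚ_[p])⁻¹ * (q - y)) := by
      simp [Ppoly, Finset.prod_Icc_succ_top]
    have hq : (q + 1 : ℚ_[p]) ≠ 0 := by exact_mod_cast q.succ_ne_zero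
    rw [hsucc, ih, ascPochhammer_succ_eval, Nat.factorial_succ]
    push_cast
    field_simp
    ring

lemma eval_Ppoly_eq_choose (q : ℕ) (y : ℚ_[p]) :
    (Ppoly p q).eval y = (-1) ^ q * Ring.choose y q := by
  have hasc : (ascPochhammer ℚ_[p] q).eval (-y) = (-1) ^ q * (descPochhammer ℤ q).smeval y := by
    rw [← ascPochhammer_smeval_eq_eval, ascPochhammer_smeval_neg_eq_descPochhammer]
    simp [Int.negOnePow_def, Units.smul_def]
  rw [eval_Ppoly, Ring.choose_eq_smul, hasc, smul_eq_mul]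
  ring

lemma norm_eval_Ppoly_le_one (q : ℕ) (a : ℤ_[p]) : ‖(Ppoly p q).eval (a : ℚ_[p])‖ ≤ 1 := by
  have hchoose : Ring.choose (a : ℚ_[p]) q = (Ring.choose a q : ℤ_[p]) :=
    (Ring.map_choose PadicInt.Coe.ringHom a q).symm
  simpa [eval_Ppoly_eq_choose, hchoose] using PadicInt.norm_le_one (Ring.choose a q)

lemma Ppoly_comp_X_add_C (l : ℕ) (y : ℚ_[p]) :
    (Ppoly p l).comp (X + C y) =
      ∑ ij ∈ Finset.HasAntidiagonal.antidiagonal l, Ppoly p ij.1 * C ((Ppoly p ij.2).eval y) := by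
  refine Polynomial.funext fun x => ?_
  simp only [eval_comp, eval_add, eval_X, eval_C, eval_finsetSum, eval_mul, eval_Ppoly_eq_choose,
    Ring.add_choose_eq l (Commute.all x y), Finset.mul_sum]
  refine Finset.sum_congr rfl fun ij hij => ?_
  rw [← Finset.HasAntidiagonal.mem_antidiagonal.1 hij]
  ring

lemma norm_inv_eval_Ppoly_sub_one_le {M : ℝ} (hM : 1 ≤ M) {b : ℚ_[p]} {l : ℕ}
    (hb : ∀ j ∈ Finset.Icc 1 l, (j : ℚ_[p]) - b ≠ 0)
    (hbM : ∀ j ∈ Finset.Icc 1 l, ‖(j : ℚ_[p]) - b‖⁻¹ ≤ M) :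
    ‖((Ppoly p l).eval (b - 1))⁻¹‖ ≤ M := by
  obtain _ | n := l
  · simpa [Ppoly] using hM
  have hshift (j : ℕ) : -(b - 1) + j = (j + 1 : ℕ) - b := by push_cast; ring
  have hmem {j : ℕ} (hj : j ≤ n) : j + 1 ∈ Finset.Icc 1 (n + 1) := by simpa using hj
  rw [eval_Ppoly, inv_div, Nat.factorial_succ, Nat.cast_mul, mul_div_assoc, norm_mul]
  calc _ ≤ 1 * M := by
        gcongr
        · exact IsUltrametricDist.norm_natCast_le_one _ _
        · exact norm_factorial_div_ascPochhammer_le (fun j hj => hshift j ▸ hb _ (hmem hj))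
            fun j hj => hshift j ▸ hbM _ (hmem hj)
    _ = M := one_mul M

lemma IsPAdicNonLiouville.exists_norm_inv_eval_Ppoly_le {b : ℤ_[p]} (hNL : IsPAdicNonLiouville b)
    (hb : ∀ j : ℕ, 0 < j → (j : ℚ_[p]) - b ≠ 0) {σ : ℝ} (hσ : 1 < σ) :
    ∃ K : ℝ, 0 < K ∧ ∀ l, ‖((Ppoly p l).eval ((b : ℚ_[p]) - 1))⁻¹‖ ≤ K * σ ^ l := by
  obtain ⟨K, hK, hbK⟩ := hNL σ hσ
  refine ⟨max K 1, by positivity, fun l => ?_⟩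
  have hσl : 1 ≤ σ ^ l := one_le_pow₀ hσ.le
  refine norm_inv_eval_Ppoly_sub_one_le (one_le_mul_of_one_le_of_one_le (le_max_right _ _) hσl)
    (fun j hj => hb j (Finset.mem_Icc.1 hj).1) fun j hj => ?_
  obtain ⟨hj, hjl⟩ := Finset.mem_Icc.1 hj
  have hneg : (b : ℚ_[p]) + ((-j : ℤ) : ℚ_[p]) = -(j - b) := by push_cast; ring
  calc ‖(j : ℚ_[p]) - b‖⁻¹ = ‖(b : ℚ_[p]) + ((-j : ℤ) : ℚ_[p])‖⁻¹ := by rw [hneg, norm_neg]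
    _ ≤ K * σ ^ j := by simpa using hbK (-j) (hneg ▸ neg_ne_zero.2 (hb j hj))
    _ ≤ max K 1 * σ ^ l := by
      gcongr
      · exact le_max_left _ _
      · exact hσ.le

lemma prod_C_inv_mul_eq_C_mul_Ppoly_comp (a b : ℚ_[p]) (l : ℕ) :
    ∏ j ∈ Finset.Icc 1 l, (C ((j - b)⁻¹) * (C (j + a) - X)) =
      C ((Ppoly p l).eval (b - 1))⁻¹ * (Ppoly p l).comp (X + C (-a - 1)) := by
  rw [Ppoly, eval_prod, ← Finset.prod_inv_distrib, map_prod, prod_comp, ← Finset.prod_mul_distrib]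
  refine Finset.prod_congr rfl fun j hj => ?_
  have hj₀ : (j : ℚ_[p]) ≠ 0 := by
    exact_mod_cast Nat.one_le_iff_ne_zero.1 (Finset.mem_Icc.1 hj).1
  have hcancel : C (j : ℚ_[p]) * C (j : ℚ_[p])⁻¹ = 1 := by rw [← C_mul, mul_inv_cancel₀ hj₀, C_1]
  have hden : (C (j : ℚ_[p])⁻¹ * (C (j - 1 : ℚ_[p]) - X)).eval (b - 1) =
      (j : ℚ_[p])⁻¹ * (j - b) := by
    simp
  have hnum : (C (j : ℚ_[p])⁻¹ * (C (j - 1 : ℚ_[p]) - X)).comp (X + C (-a - 1)) =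
      C (j : ℚ_[p])⁻¹ * (C (j + a) - X) := by
    simp only [mul_comp, sub_comp, C_comp, X_comp, map_sub, map_add, map_neg]
    ring
  rw [hden, hnum, mul_inv, inv_inv, C_mul]
  linear_combination -(C ((j - b)⁻¹) * (C (j + a) - X)) * hcancel

section Operator

variable {V : Type*} [SeminormedAddCommGroup V] [NormedSpace ℚ_[p] V] {T : Module.End ℚ_[p] V}

lemma const_mem_subexponentialAt_of_Ppoly_mem (hP : Ppoly p ∈ subexponentialAt T) (Q : ℚ_[p][X]) :
    (fun _ => Q) ∈ subexponentialAt T := by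
  refine const_mem_subexponentialAt ?_ Q
  have hP₁ : (fun _ => -Ppoly p 1) ∈ subexponentialAt T := neg_mem (hP.const_apply 1)
  simpa [Ppoly] using hP₁

lemma Ppoly_comp_X_add_C_mem_subexponentialAt (hP : Ppoly p ∈ subexponentialAt T) (a : ℤ_[p]) :
    (fun l => (Ppoly p l).comp (X + C (a : ℚ_[p]))) ∈ subexponentialAt T := by
  have hcoeff : IsSubexponential fun l => aeval T (C ((Ppoly p l).eval (a : ℚ_[p]))) := by
    refine .of_bounded (K := 1) fun l v => ?_
    rw [aeval_C, Module.algebraMap_end_apply, norm_smul]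
    gcongr
    exact norm_eval_Ppoly_le_one l a
  have hsum := (mem_subexponentialAt.1 hP).sum_antidiagonal hcoeff
  simpa only [mem_subexponentialAt, Ppoly_comp_X_add_C, map_sum, map_mul] using hsum

lemma prod_C_inv_mul_mem_subexponentialAt (hP : Ppoly p ∈ subexponentialAt T) (a : ℤ_[p])
    {b : ℤ_[p]} (hNL : IsPAdicNonLiouville b) (hb : ∀ j : ℕ, 0 < j → (j : ℚ_[p]) - b ≠ 0) :
    (fun l : ℕ => ∏ j ∈ Finset.Icc 1 l, (C (((j : ℚ_[p]) - b)⁻¹) * (C ((j : ℚ_[p]) + a) - X))) ∈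
      subexponentialAt T := by
  have hnum : (fun l => (Ppoly p l).comp (X + C (-(a : ℚ_[p]) - 1))) ∈ subexponentialAt T := by
    simpa using Ppoly_comp_X_add_C_mem_subexponentialAt hP (-a - 1)
  have hden : (fun l => C ((Ppoly p l).eval ((b : ℚ_[p]) - 1))⁻¹) ∈ subexponentialAt T := by
    simpa only [mem_subexponentialAt, aeval_C] using
      IsSubexponential.algebraMap_of_norm_le fun _ => hNL.exists_norm_inv_eval_Ppoly_le hb
  simp only [prod_C_inv_mul_eq_C_mul_Ppoly_comp]
  exact mul_mem hden hnum

lemma Dpoly_mem_subexponentialAt (hP : Ppoly p ∈ subexponentialAt T) {n₀ : ℕ} (hn₀ : 0 < n₀)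
    {ξ : Fin n₀ → ℤ_[p]} (hNL : ∀ k, IsPAdicNonLiouville (ξ ⟨0, hn₀⟩ - ξ k))
    (hξ : ∀ k, ∀ j : ℕ, 0 < j → (j : ℚ_[p]) - (ξ ⟨0, hn₀⟩ - ξ k : ℤ_[p]) ≠ 0)
    (m : ℕ) (Q : ℚ_[p][X]) : Dpoly p n₀ hn₀ ξ m Q ∈ subexponentialAt T := by
  have hmem := mul_mem (const_mem_subexponentialAt_of_Ppoly_mem hP Q)
    (prod_mem fun k (_ : k ∈ Finset.univ) =>
      pow_mem (prod_C_inv_mul_mem_subexponentialAt hP (ξ k) (hNL k) (hξ k)) m)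
  convert hmem using 1
  ext1 l
  simp [Dpoly, Finset.prod_pow]

end Operator

end Padic

lemma natCast_sub_ne_zero_of_eq_zero_or_ne_intCast {K : Type*} [Ring K] [CharZero K] {b : K}
    (hb : b = 0 ∨ ∀ i : ℤ, b ≠ i) {j : ℕ} (hj : 0 < j) : (j : K) - b ≠ 0 := by
  obtain rfl | hb := hb
  · simpa using hj.ne'
  · simpa [sub_ne_zero] using (hb j).symm

theorem stmt11_general {p : ℕ} [Fact p.Prime] {V : Type*} [SeminormedAddCommGroup V]
    [NormedSpace ℚ_[p] V] (T : Module.End ℚ_[p] V)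
    (hlog : ∀ η : ℝ, 0 < η → η < 1 → ∃ Cη : ℝ, 0 < Cη ∧
      ∀ q : ℕ, ∀ v : V, ‖(aeval T (Ppoly p q)) v‖ ≤ Cη * η⁻¹ ^ q * ‖v‖)
    (n₀ : ℕ) (hn₀ : 0 < n₀) (ξ : Fin n₀ → ℤ_[p])
    (hNL : ∀ k, IsPAdicNonLiouville (ξ ⟨0, hn₀⟩ - ξ k))
    (hξ : ∀ k, ∀ j : ℕ, 0 < j → (j : ℚ_[p]) - (ξ ⟨0, hn₀⟩ - ξ k : ℤ_[p]) ≠ 0)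
    (m : ℕ) (Q : ℚ_[p][X]) :
    ∀ η : ℝ, 0 < η → η < 1 → ∀ ε : ℝ, 0 < ε → ∃ L : ℕ, ∀ l : ℕ, L ≤ l → ∀ v : V,
      ‖(aeval T (Dpoly p n₀ hn₀ ξ m Q l)) v‖ ≤ ε * η⁻¹ ^ l * ‖v‖ := by
  have hP : Ppoly p ∈ subexponentialAt T := fun σ hσ => by
    simpa using hlog σ⁻¹ (by positivity) (inv_lt_one_of_one_lt₀ hσ)
  have hD : IsSubexponential fun l => aeval T (Dpoly p n₀ hn₀ ξ m Q l) :=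
    Dpoly_mem_subexponentialAt hP hn₀ hNL hξ m Q
  exact fun η hη₀ hη₁ ε hε => hD.exists_forall_norm_apply_le ((one_lt_inv₀ hη₀).2 hη₁) hε

/-- **Operator-norm decay from the proof of Proposition 3.6.2.**
Let `∂` be an endomorphism of a nonarchimedean normed `ℚ_p`-vector space `V`
satisfying the log-convergence condition: for every `η ∈ (0,1)` there is `C_η > 0`
with `‖P_q(∂) v‖ ≤ C_η η⁻¹^q ‖v‖` for all `q` and `v`.  Let `ξ_1, …, ξ_{n₀} ∈ ℤ_p`
have all differences `p`-adically non-Liouville and each difference `0` or not a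
rational integer, let `m ≥ 1` and `Q ∈ ℚ_p[x]`.  Then for every `η ∈ (0,1)` and
`ε > 0` there is `L` with `‖D_l(∂) v‖ ≤ ε η⁻¹^l ‖v‖` for all `l ≥ L` and `v ∈ V`;
i.e. the operator norms of `D_l(∂)` times `η^l` tend to `0`. -/
theorem stmt11 (p : ℕ) [Fact p.Prime] (V : Type*) [NormedAddCommGroup V]
    [NormedSpace ℚ_[p] V] [IsUltrametricDist V]
    (T : Module.End ℚ_[p] V)
    (hlog : ∀ η : ℝ, 0 < η → η < 1 → ∃ Cη : ℝ, 0 < Cη ∧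
      ∀ q : ℕ, ∀ v : V, ‖(Polynomial.aeval T (Ppoly p q)) v‖ ≤ Cη * η⁻¹ ^ q * ‖v‖)
    (n₀ : ℕ) (hn₀ : 0 < n₀) (ξ : Fin n₀ → ℤ_[p])
    (hNL : ∀ k k' : Fin n₀, IsPAdicNonLiouville (ξ k - ξ k'))
    (hNI : ∀ k k' : Fin n₀, ξ k - ξ k' = 0 ∨
      ∀ i : ℤ, ((ξ k - ξ k' : ℤ_[p]) : ℚ_[p]) ≠ (i : ℚ_[p]))
    (m : ℕ) (hm : 1 ≤ m) (Q : Polynomial ℚ_[p]) :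
    ∀ η : ℝ, 0 < η → η < 1 → ∀ ε : ℝ, 0 < ε → ∃ L : ℕ, ∀ l : ℕ, L ≤ l → ∀ v : V,
      ‖(Polynomial.aeval T (Dpoly p n₀ hn₀ ξ m Q l)) v‖ ≤ ε * η⁻¹ ^ l * ‖v‖ :=
  stmt11_general T hlog n₀ hn₀ ξ (hNL _)
    (fun k _ hj => natCast_sub_ne_zero_of_eq_zero_or_ne_intCast
      ((hNI ⟨0, hn₀⟩ k).imp_left (congrArg PadicInt.Coe.ringHom)) hj) m Q
end
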